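/- ((q+1)th Power Law.) For every prime p, every real β > 0, and every f ∈ ℂ, the series Z(f, ℙ¹(ℚ_p), β) and Z(pf/(p+1), pℤ_p, β) converge absolutely and satisfy Z(f, ℙ¹(ℚ_p), β) = (Z(pf/(p+1), pℤ_p, β))^{p+1}. -/

import Mathlib

open MeasureTheory
open scoped LinearAlgebra.Projectivization

namespace LogCoulomb

noncomputable section

/-! ### The projective line over `ℚ_p`, its spherical metric and `PGL₂`-invariant measure -/

variable (p : ℕ) [Fact p.Prime]

instance : MeasurableSpace ℚ_[p] := borel _
instance : BorelSpace ℚ_[p] := ⟨rfl⟩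

/-- The projective line over `ℚ_p`. -/
abbrev P1 := ℙ ℚ_[p] (Fin 2 → ℚ_[p])

instance : TopologicalSpace (P1 p) :=
  inferInstanceAs (TopologicalSpace (Quotient _))

instance : MeasurableSpace (P1 p) := borel _
instance : BorelSpace (P1 p) := ⟨rfl⟩

/-- Spherical distance on homogeneous coordinates:
`δ((x₀,x₁),(y₀,y₁)) = |x₀y₁ - x₁y₀| / (max(|x₀|,|x₁|) ⬝ max(|y₀|,|y₁|))`. -/
def sdelta (x y : Fin 2 → ℚ_[p]) : ℝ :=
  ‖x 0 * y 1 - x 1 * y 0‖ / (max ‖x 0‖ ‖x 1‖ * max ‖y 0‖ ‖y 1‖)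

/-- The spherical metric on `ℙ¹(ℚ_p)`, defined via the canonical representatives. -/
def pdelta (ξ η : P1 p) : ℝ := sdelta p ξ.rep η.rep

open Classical in
/-- The action of a matrix on `ℙ¹(ℚ_p)`: `[x₀:x₁] ↦ [a x₀ + b x₁ : c x₀ + d x₁]`
(well-defined, and given by the first branch of the `if`, whenever `A` is invertible). -/
def mobius (A : Matrix (Fin 2) (Fin 2) ℚ_[p]) (ξ : P1 p) : P1 p :=
  if h : A.mulVec ξ.rep ≠ 0 then Projectivization.mk ℚ_[p] (A.mulVec ξ.rep) h else ξ

/-- `ν` is invariant under the action of `GL₂(ℤ_p)` on `ℙ¹(ℚ_p)`; membership of the matrix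
entries in `ℤ_p`, and invertibility of the matrix over `ℤ_p`, are phrased via the `p`-adic
norm on `ℚ_p`. -/
def IsGLInvariant (ν : Measure (P1 p)) : Prop :=
  ∀ A : Matrix (Fin 2) (Fin 2) ℚ_[p],
    (∀ i j, ‖A i j‖ ≤ 1) → ‖A.det‖ = 1 →
      ∀ M : Set (P1 p), MeasurableSet M → ν (mobius p A '' M) = ν M

/-- The embedding `ι : ℚ_p → ℙ¹(ℚ_p)`, `x ↦ [x : 1]`. -/
def iota (x : ℚ_[p]) : P1 p :=
  Projectivization.mk ℚ_[p] ![x, 1] (by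
    intro h
    have h1 := congrFun h 1
    simp at h1)

/-! ### Canonical partition functions -/

/-- The pairs `(i,j)` with `i < j`. -/
def pairs (N : ℕ) : Finset (Fin N × Fin N) := Finset.univ.filter fun q => q.1 < q.2

/-- The closed unit ball `ℤ_p = R` inside `ℚ_p`. -/
def Zball : Set ℚ_[p] := {x | ‖x‖ ≤ 1}

/-- The open unit ball `pℤ_p = P` inside `ℚ_p`. -/
def Pball : Set ℚ_[p] := {x | ‖x‖ < 1}

/-- The one-component canonical partition function
`Z_N(X, β) = ∫_{X^N} ∏_{i<j} |x_i - x_j|^β dμ^N` (as a Bochner integral, whether or not it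
converges absolutely). -/
def ZN (μ : Measure ℚ_[p]) [SigmaFinite μ] (X : Set ℚ_[p]) (N : ℕ) (β : ℂ) : ℂ :=
  ∫ x : Fin N → ℚ_[p], ∏ q ∈ pairs N, (‖x q.1 - x q.2‖ : ℂ) ^ β
    ∂(Measure.pi fun _ => μ.restrict X)

/-- The multivariate canonical partition function
`𝒵_I(X, s) = ∫_{X^I} ∏_{i<j, i,j ∈ I} |x_i - x_j|^{s_{ij}} dμ^I` for a subset `I ⊆ [N]`. -/
def ZI (μ : Measure ℚ_[p]) [SigmaFinite μ] (X : Set ℚ_[p]) {N : ℕ} (I : Finset (Fin N))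
    (s : Fin N → Fin N → ℂ) : ℂ :=
  ∫ x : I → ℚ_[p],
    ∏ q ∈ Finset.univ.filter (fun q : (↥I) × (↥I) => (q.1 : Fin N) < (q.2 : Fin N)),
      (‖x q.1 - x q.2‖ : ℂ) ^ s q.1.1 q.2.1
    ∂(Measure.pi fun _ => μ.restrict X)

/-- The multivariate canonical partition function
`𝒵_N(ℙ¹(ℚ_p), s) = ∫_{(ℙ¹(ℚ_p))^N} ∏_{i<j} δ(ξ_i,ξ_j)^{s_{ij}} dν^N`. -/
def ZP1s (ν : Measure (P1 p)) [SigmaFinite ν] (N : ℕ) (s : Fin N → Fin N → ℂ) : ℂ :=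
  ∫ x : Fin N → P1 p, ∏ q ∈ pairs N, ((pdelta p (x q.1) (x q.2) : ℝ) : ℂ) ^ s q.1 q.2
    ∂(Measure.pi fun _ => ν)

/-- The one-component canonical partition function `Z_N(ℙ¹(ℚ_p), β)`. -/
def ZP1 (ν : Measure (P1 p)) [SigmaFinite ν] (N : ℕ) (β : ℂ) : ℂ :=
  ∫ x : Fin N → P1 p, ∏ q ∈ pairs N, ((pdelta p (x q.1) (x q.2) : ℝ) : ℂ) ^ β
    ∂(Measure.pi fun _ => ν)

/-! ### The quadratic recurrence -/

/-- The factor `ρ_{N,k}(t,β)` appearing in the quadratic recurrence; here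
`N.choose 2 = N(N-1)/2`. -/
def rho (N k : ℕ) (t : ℝ) (β : ℂ) : ℂ :=
  if t = 0 then
    (((N : ℂ) + (N.choose 2 : ℂ) * β) * (1 - 2 * (k : ℂ) / (N : ℂ)) + 1) /
      (((N : ℂ) + (N.choose 2 : ℂ) * β) - 1)
  else
    Complex.sinh (((t : ℂ) / 2) * (((N : ℂ) + (N.choose 2 : ℂ) * β) * (1 - 2 * (k : ℂ) / (N : ℂ)) + 1)) /
      Complex.sinh (((t : ℂ) / 2) * (((N : ℂ) + (N.choose 2 : ℂ) * β) - 1))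

/-- The quadratic recurrence: `F 0 = F 1 = 1` and
`F N t β = ∑_{k=1}^{N-1} (k/N) ρ_{N,k}(t,β) F_{N-k}(t,β) F_k(t,β)` for `N ≥ 2`. -/
def F : ℕ → ℝ → ℂ → ℂ
  | 0, _, _ => 1
  | 1, _, _ => 1
  | N + 2, t, β =>
    ∑ k ∈ (Finset.Icc 1 (N + 1)).attach,
      (((k : ℕ) : ℂ) / ((N : ℂ) + 2)) * rho (N + 2) k t β *
        F (N + 2 - (k : ℕ)) t β * F (k : ℕ) t β
  decreasing_by
  all_goals
    have hk := Finset.mem_Icc.mp k.2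
    omega

/-! ### Splitting chains -/

/-- A splitting chain `Λ_0 > Λ_1 > ⋯ > Λ_L` of set partitions of the subset `I ⊆ [N]`,
beginning with the trivial partition `{I}` and ending with the partition of `I` into
singletons.  (The values `Λ ℓ` for `ℓ > L` are required to be `∅`, so that a chain is
determined by the genuine data `Λ_0, …, Λ_L`.) -/
structure SplChain (N : ℕ) (I : Finset (Fin N)) where
  L : ℕ
  Λ : ℕ → Finset (Finset (Fin N))
  nonempty_mem : ∀ ℓ ≤ L, ∀ B ∈ Λ ℓ, B.Nonempty
  subset_mem : ∀ ℓ ≤ L, ∀ B ∈ Λ ℓ, B ⊆ I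
  cover : ∀ ℓ ≤ L, ∀ i ∈ I, ∃! B, B ∈ Λ ℓ ∧ i ∈ B
  first : Λ 0 = {I}
  last : Λ L = I.image fun i => {i}
  refines : ∀ ℓ < L, ∀ B ∈ Λ (ℓ + 1), ∃ C ∈ Λ ℓ, B ⊆ C
  strict : ∀ ℓ < L, Λ (ℓ + 1) ≠ Λ ℓ
  trailing : ∀ ℓ, L < ℓ → Λ ℓ = ∅

variable {N : ℕ} {I : Finset (Fin N)}

/-- The branches of a splitting chain: the non-singleton parts,
`ℬ(𝔖) = (Λ_0 ∪ ⋯ ∪ Λ_{L-1}) \ Λ_L`. -/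
def SplChain.branches (S : SplChain N I) : Finset (Finset (Fin N)) :=
  ((Finset.range S.L).biUnion S.Λ) \ S.Λ S.L

/-- The depth `ℓ_𝔖(λ) = max {ℓ : λ ∈ Λ_ℓ}` of a branch. -/
def SplChain.depth (S : SplChain N I) (lam : Finset (Fin N)) : ℕ :=
  ((Finset.range (S.L + 1)).filter fun ℓ => lam ∈ S.Λ ℓ).sup id

/-- The degree `deg_𝔖(λ) = #{λ' ∈ Λ_{ℓ_𝔖(λ)+1} : λ' ⊆ λ}` of a branch. -/
def SplChain.degree (S : SplChain N I) (lam : Finset (Fin N)) : ℕ :=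
  ((S.Λ (S.depth lam + 1)).filter fun lam' => lam' ⊆ lam).card

/-- A splitting chain is reduced if every branch appears in exactly one partition of the
chain (namely the one at its depth). -/
def SplChain.Reduced (S : SplChain N I) : Prop :=
  ∀ lam ∈ S.branches, ∀ ℓ ≤ S.L, (lam ∈ S.Λ ℓ ↔ ℓ = S.depth lam)

/-- `e_λ(s) = #λ - 1 + ∑_{i<j, i,j ∈ λ} s_{ij}`. -/
def eexp (lam : Finset (Fin N)) (s : Fin N → Fin N → ℂ) : ℂ :=
  (lam.card : ℂ) - 1 + ∑ q ∈ (pairs N).filter fun q => q.1 ∈ lam ∧ q.2 ∈ lam, s q.1 q.2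

/-- Membership in `Ω_I`: `Re e_λ(s) > 0` for every `λ ⊆ I` with `#λ > 1`. -/
def InOmega (I : Finset (Fin N)) (s : Fin N → Fin N → ℂ) : Prop :=
  ∀ lam ⊆ I, 1 < lam.card → 0 < (eexp lam s).re


/-- The multivariate canonical partition function `𝒵_N(ℤ_p, s)` over `Fin N`-indexed tuples. -/
def ZNs (μ : Measure ℚ_[p]) [SigmaFinite μ] (X : Set ℚ_[p]) (N : ℕ)
    (s : Fin N → Fin N → ℂ) : ℂ :=
  ∫ x : Fin N → ℚ_[p], ∏ q ∈ pairs N, (‖x q.1 - x q.2‖ : ℂ) ^ s q.1 q.2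
    ∂(Measure.pi fun _ => μ.restrict X)

/-- The ball `p^v ℤ_p = {x : |x| ≤ p^{-v}}` in `ℚ_p`. -/
def pvball (v : ℤ) : Set ℚ_[p] := {x | ‖x‖ ≤ (p : ℝ) ^ (-v)}

/-- `G_N(q,β) = N! q^{(1/2)(N choose 2)β} F_N(log q, β)`. -/
def GN (N : ℕ) (β : ℂ) (q : ℝ) : ℂ :=
  (N.factorial : ℂ) * (q : ℂ) ^ ((N.choose 2 : ℂ) * β / 2) * F N (Real.log q) β

/-- `H_N(q,β)`, the efficient formula for `Z_N(ℙ¹(K),β)` as a function of `q`. -/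
def HN (N : ℕ) (β : ℂ) (q : ℝ) : ℂ :=
  (N.factorial : ℂ) * ∑ k ∈ Finset.range (N + 1),
    Complex.cosh (((Real.log q : ℂ) / 2) * ((N : ℂ) + (N.choose 2 : ℂ) * β) *
          (1 - 2 * (k : ℂ) / (N : ℂ))) /
        (2 * Complex.cosh ((Real.log q : ℂ) / 2)) ^ N *
      F (N - k) (Real.log q) β * F k (Real.log q) β

end

/-!
The `p + 1` residue balls of `ℙ¹(ℚ_p)`, the fibres of the reduction to `ℙ¹(𝔽_p)`, are open unit
balls for `δ`, and points of different balls are at distance exactly `1`. Hence the Boltzmann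
factor of a configuration is the product of those of its parts in the balls, and summing over all
distributions of the particles turns the exponential generating function `Z(f, ℙ¹(ℚ_p), β)` into a
product over the balls. As `GL₂(ℤ_p)` permutes the balls transitively and preserves `δ` and `ν`, the
factors are all equal. On the ball `ι(pℤ_p)` of `[0 : 1]`, `δ` is the distance of `ℚ_p`, and `ν` is
translation invariant with total mass `p/(p+1)` on `ι(ℤ_p)`, hence `p/(p+1)` times Haar measure;
this scalar rescales the fugacity.
-/

noncomputable section PartitionFunction

open scoped NNReal Nat

variable {X Y 𝕜 ι κ : Type*}

lemma pi_const_smul [MeasurableSpace X] [Fintype ι] (m : Measure X) [SigmaFinite m] (c : ℝ≥0) :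
    (Measure.pi fun _ : ι => c • m) = c ^ Fintype.card ι • Measure.pi fun _ => m := by
  refine Measure.pi_eq fun s _ => ?_
  simp only [Measure.smul_apply, Measure.pi_pi, ENNReal.smul_def, smul_eq_mul,
    Finset.prod_mul_distrib, Finset.prod_const, Finset.card_univ, ENNReal.coe_pow]

/-- The configurations whose particles lie in `A` for the indices satisfying `S`, and in `B` for
the others. -/
def cell (A B : Set X) (S : ι → Prop) [DecidablePred S] : Set (ι → X) :=
  Set.univ.pi fun i => if S i then A else B

lemma iUnion_cell [Finite ι] [DecidableEq ι] (A B : Set X) :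
    ⋃ S : Finset ι, cell A B (· ∈ S) = Set.univ.pi fun _ => A ∪ B := by
  classical
  have := Fintype.ofFinite ι
  refine subset_antisymm (Set.iUnion_subset fun S => Set.pi_mono fun i _ => ?_) fun x hx => ?_
  · split_ifs
    exacts [Set.subset_union_left, Set.subset_union_right]
  · refine Set.mem_iUnion.2 ⟨Finset.univ.filter (x · ∈ A), fun i _ => ?_⟩
    by_cases hi : x i ∈ A
    · simp [hi]
    · simpa [hi] using hx i trivial

lemma pairwise_disjoint_cell [DecidableEq ι] {A B : Set X} (hAB : Disjoint A B) :
    Pairwise fun S T : Finset ι => Disjoint (cell A B (· ∈ S)) (cell A B (· ∈ T)) := by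
  have mem_iff {S : Finset ι} {x : ι → X} (hx : x ∈ cell A B (· ∈ S)) (i : ι) :
      i ∈ S ↔ x i ∈ A := by
    have hi := hx i trivial
    by_cases hS : i ∈ S
    · simpa [hS] using hi
    · simpa [hS] using hAB.notMem_of_mem_right (by simpa [hS] using hi)
  exact fun S T hST => Set.disjoint_left.2 fun x hS hT =>
    hST (Finset.ext fun i => (mem_iff hS i).trans (mem_iff hT i).symm)

lemma measurableSet_cell [MeasurableSpace X] [Finite ι] {A B : Set X} (hA : MeasurableSet A)
    (hB : MeasurableSet B) (S : ι → Prop) [DecidablePred S] : MeasurableSet (cell A B S) :=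
  .univ_pi fun i => by split_ifs <;> assumption

variable [RCLike 𝕜]

/-- Two regions are decoupled for the interaction `g` when they are disjoint and a particle of one
does not interact with a particle of the other. -/
structure Decoupled (g : X → X → 𝕜) (A B : Set X) : Prop where
  disjoint : Disjoint A B
  left_eq_one : ∀ x ∈ A, ∀ y ∈ B, g x y = 1
  right_eq_one : ∀ x ∈ A, ∀ y ∈ B, g y x = 1

lemma Decoupled.iUnion_right {g : X → X → 𝕜} {A : Set X} {C : κ → Set X} {s : Finset κ}
    (h : ∀ k ∈ s, Decoupled g A (C k)) : Decoupled g A (⋃ k ∈ s, C k) where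
  disjoint := Set.disjoint_iUnion₂_right.2 fun k hk => (h k hk).disjoint
  left_eq_one x hx y hy := by
    obtain ⟨k, hk, hy⟩ := Set.mem_iUnion₂.1 hy
    exact (h k hk).left_eq_one x hx y hy
  right_eq_one x hx y hy := by
    obtain ⟨k, hk, hy⟩ := Set.mem_iUnion₂.1 hy
    exact (h k hk).right_eq_one x hx y hy

variable [Fintype ι] [LinearOrder ι]

/-- The product `∏_{i < j} g (x i) (x j)` of the pair interactions of a configuration `x`
of particles indexed by a finite linear order. -/
def pairProd (g : X → X → 𝕜) (x : ι → X) : 𝕜 :=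
  ∏ q : ι × ι with q.1 < q.2, g (x q.1) (x q.2)

lemma norm_pairProd_le_one {g : X → X → 𝕜} (hle : ∀ x y, ‖g x y‖ ≤ 1) (x : ι → X) :
    ‖pairProd g x‖ ≤ 1 := by
  rw [pairProd, norm_prod]
  exact Finset.prod_le_one (fun _ _ => norm_nonneg _) fun _ _ => hle _ _

lemma pairProd_comp_orderIso [Fintype κ] [LinearOrder κ] (g : X → X → 𝕜) (e : κ ≃o ι) (x : ι → X) :
    pairProd g (x ∘ e) = pairProd g x :=
  Finset.prod_equiv (e.toEquiv.prodCongr e.toEquiv) (by simp) (by simp)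

lemma pairProd_eq_prod_ite (g : X → X → 𝕜) (x : ι → X) :
    pairProd g x = ∏ i, ∏ j, if i < j then g (x i) (x j) else 1 := by
  rw [pairProd, Finset.prod_filter, Fintype.prod_prod_type]

lemma pairProd_eq_mul_of_mem_cell {g : X → X → 𝕜} {A B : Set X} (h : Decoupled g A B)
    {S : ι → Prop} [DecidablePred S] {x : ι → X} (hx : x ∈ cell A B S) :
    pairProd g x =
      pairProd g (fun i : {i // S i} => x i) * pairProd g (fun i : {i // ¬ S i} => x i) := by
  have hcross (i : {i // S i}) (j : {j // ¬ S j}) : g (x i) (x j) = 1 ∧ g (x j) (x i) = 1 := by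
    have hi : x i ∈ A := by simpa [i.2] using hx i trivial
    have hj : x j ∈ B := by simpa [j.2] using hx j trivial
    exact ⟨h.left_eq_one _ hi _ hj, h.right_eq_one _ hi _ hj⟩
  simp only [pairProd_eq_prod_ite]
  rw [← Fintype.prod_subtype_mul_prod_subtype S]
  simp only [← Fintype.prod_subtype_mul_prod_subtype S fun j => ite (_ < j) _ _,
    Finset.prod_mul_distrib]
  simp only [hcross, ite_self, Finset.prod_const_one, mul_one, one_mul, Subtype.coe_lt_coe]

variable [MeasurableSpace X] [MeasurableSpace Y]

lemma measurable_pairProd {g : X → X → 𝕜} (hg : Measurable (Function.uncurry g)) :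
    Measurable (pairProd g : (ι → X) → 𝕜) :=
  Finset.measurable_fun_prod _ fun q _ =>
    hg.comp (f := fun x : ι → X => (x q.1, x q.2)) (by fun_prop)

lemma integrable_pairProd {g : X → X → 𝕜} (hg : Measurable (Function.uncurry g))
    (hle : ∀ x y, ‖g x y‖ ≤ 1) (m : Measure (ι → X)) [IsFiniteMeasure m] :
    Integrable (pairProd g) m :=
  .of_bound (measurable_pairProd hg).aestronglyMeasurable 1
    (.of_forall (norm_pairProd_le_one hle))

/-- The canonical partition function of particles indexed by `ι`, with reference measure `m`
and pair interaction `g`. -/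
def partitionFunction (m : Measure X) (g : X → X → 𝕜) (ι : Type*) [Fintype ι] [LinearOrder ι] :
    𝕜 :=
  ∫ x : ι → X, pairProd g x ∂Measure.pi fun _ => m

variable (m : Measure X) (g : X → X → 𝕜)

lemma partitionFunction_congr [Fintype κ] [LinearOrder κ] [SigmaFinite m]
    (h : Fintype.card ι = Fintype.card κ) :
    partitionFunction m g ι = partitionFunction m g κ := by
  let e : ι ≃o κ := (Fintype.orderIsoFinOfCardEq ι h).symm.trans
    (Fintype.orderIsoFinOfCardEq κ rfl)
  have he := measurePreserving_piCongrLeft (fun _ : κ => m) e.toEquiv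
  rw [partitionFunction, partitionFunction, ← he.integral_comp' (g := pairProd g)]
  refine integral_congr_ae (.of_forall fun x => ?_)
  dsimp only
  rw [← pairProd_comp_orderIso g e]
  congr 1
  ext i
  exact (MeasurableEquiv.piCongrLeft_apply_apply (β := fun _ => X) e.toEquiv x i).symm

variable {m g}

lemma norm_partitionFunction_le [IsFiniteMeasure m] (hle : ∀ x y, ‖g x y‖ ≤ 1) :
    ‖partitionFunction m g ι‖ ≤ m.real Set.univ ^ Fintype.card ι := by
  refine (norm_integral_le_of_norm_le_const (.of_forall (norm_pairProd_le_one hle))).trans_eq ?_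
  simp [measureReal_def, Measure.pi_univ]

variable (m g) in
lemma partitionFunction_smul [SigmaFinite m] (c : ℝ≥0) :
    partitionFunction (c • m) g ι = c ^ Fintype.card ι • partitionFunction m g ι := by
  rw [partitionFunction, pi_const_smul, integral_smul_nnreal_measure]
  rfl

lemma partitionFunction_eq_of_measurePreserving [SigmaFinite m] {m' : Measure Y} [SigmaFinite m']
    {h : X → Y} (hh : MeasurePreserving h m m') {g : Y → Y → 𝕜}
    (hg : Measurable (Function.uncurry g)) :
    partitionFunction m' g ι = partitionFunction m (fun x y => g (h x) (h y)) ι := by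
  have hpi := measurePreserving_pi (fun _ : ι => m) (fun _ => m') fun _ => hh
  rw [partitionFunction, ← hpi.map_eq, integral_map hpi.aemeasurable
    (measurable_pairProd hg).aestronglyMeasurable]
  rfl

lemma setIntegral_pairProd [SigmaFinite m] (A : Set X) :
    ∫ x in Set.univ.pi fun _ : ι => A, pairProd g x ∂Measure.pi (fun _ => m) =
      partitionFunction (m.restrict A) g ι := by
  rw [Measure.restrict_pi_pi]
  rfl

lemma setIntegral_cell_pairProd [SigmaFinite m] {A B : Set X} (hA : MeasurableSet A)
    (hB : MeasurableSet B) (h : Decoupled g A B) (S : ι → Prop) [DecidablePred S] :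
    ∫ x in cell A B S, pairProd g x ∂Measure.pi (fun _ => m) =
      partitionFunction (m.restrict A) g {i // S i} *
        partitionFunction (m.restrict B) g {i // ¬ S i} := by
  rw [setIntegral_congr_fun (measurableSet_cell hA hB S) fun _ => pairProd_eq_mul_of_mem_cell h,
    cell, Measure.restrict_pi_pi]
  have he := measurePreserving_piEquivPiSubtypeProd
    (fun i => m.restrict (if S i then A else B)) S
  have hA' : (fun i : {i // S i} => m.restrict (if S i then A else B)) =
    fun _ => m.restrict A := funext fun i => by rw [if_pos i.2]
  have hB' : (fun i : {i // ¬ S i} => m.restrict (if S i then A else B)) =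
    fun _ => m.restrict B := funext fun i => by rw [if_neg i.2]
  rw [hA', hB'] at he
  rw [partitionFunction, partitionFunction, ← integral_prod_mul]
  exact he.integral_comp' (g := fun z => pairProd g z.1 * pairProd g z.2)

lemma partitionFunction_restrict_union [IsFiniteMeasure m] (hg : Measurable (Function.uncurry g))
    (hle : ∀ x y, ‖g x y‖ ≤ 1) {A B : Set X} (hA : MeasurableSet A) (hB : MeasurableSet B)
    (h : Decoupled g A B) (N : ℕ) :
    partitionFunction (m.restrict (A ∪ B)) g (Fin N) =
      ∑ k ∈ Finset.range (N + 1), N.choose k •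
        (partitionFunction (m.restrict A) g (Fin k) *
          partitionFunction (m.restrict B) g (Fin (N - k))) := by
  have hcell (S : Fin N → Prop) [DecidablePred S] {k : ℕ} (hk : Fintype.card {i // S i} = k) :
      ∫ x in cell A B S, pairProd g x ∂Measure.pi (fun _ => m) =
        partitionFunction (m.restrict A) g (Fin k) *
          partitionFunction (m.restrict B) g (Fin (N - k)) := by
    have hk' : Fintype.card {i // ¬ S i} = N - k := by
      rw [Fintype.card_subtype_compl, Fintype.card_fin, hk]
    rw [setIntegral_cell_pairProd hA hB h,
      partitionFunction_congr _ _ (hk.trans (Fintype.card_fin k).symm),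
      partitionFunction_congr _ _ (hk'.trans (Fintype.card_fin (N - k)).symm)]
  rw [← setIntegral_pairProd, ← iUnion_cell, integral_iUnion
    (fun S => measurableSet_cell hA hB _) (pairwise_disjoint_cell h.disjoint)
    (integrable_pairProd hg hle _).integrableOn, tsum_fintype]
  have hcard := Finset.sum_powerset_apply_card (fun k =>
    partitionFunction (m.restrict A) g (Fin k) *
    partitionFunction (m.restrict B) g (Fin (N - k))) (x := (Finset.univ : Finset (Fin N)))
  rw [Finset.card_fin, Finset.powerset_univ] at hcard
  rw [← hcard]
  exact Finset.sum_congr rfl fun S _ => hcell (· ∈ S) (by simp [Fintype.card_subtype])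

variable (m g) in
/-- The grand canonical partition function with fugacity `f`. -/
def grandPartitionFunction (f : 𝕜) : 𝕜 :=
  ∑' N, partitionFunction m g (Fin N) * f ^ N / (N ! : 𝕜)

lemma summable_norm_partitionFunction [IsFiniteMeasure m] (hle : ∀ x y, ‖g x y‖ ≤ 1) (f : 𝕜) :
    Summable fun N => ‖partitionFunction m g (Fin N) * f ^ N / (N ! : 𝕜)‖ := by
  refine .of_nonneg_of_le (fun _ => norm_nonneg _) (fun N => ?_)
    (Real.summable_pow_div_factorial (m.real Set.univ * ‖f‖))
  have hN := norm_partitionFunction_le (m := m) (ι := Fin N) hle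
  rw [Fintype.card_fin] at hN
  rw [norm_div, norm_mul, norm_pow, RCLike.norm_natCast, mul_pow]
  gcongr

variable (m g) in
lemma grandPartitionFunction_smul [SigmaFinite m] (c : ℝ≥0) (f : 𝕜) :
    grandPartitionFunction (c • m) g f = grandPartitionFunction m g (c • f) := by
  simp only [grandPartitionFunction, partitionFunction_smul, Fintype.card_fin, smul_pow,
    smul_mul_assoc, mul_smul_comm]

variable (g) in
lemma grandPartitionFunction_zero_measure (f : 𝕜) :
    grandPartitionFunction (0 : Measure X) g f = 1 := by
  rw [← zero_smul ℝ≥0 (0 : Measure X), grandPartitionFunction_smul, zero_smul,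
    grandPartitionFunction, tsum_eq_single 0 fun N hN => by simp [hN]]
  simp [partitionFunction, pairProd, measureReal_def]

lemma grandPartitionFunction_restrict_union [IsFiniteMeasure m]
    (hg : Measurable (Function.uncurry g)) (hle : ∀ x y, ‖g x y‖ ≤ 1) {A B : Set X}
    (hA : MeasurableSet A) (hB : MeasurableSet B) (h : Decoupled g A B) (f : 𝕜) :
    grandPartitionFunction (m.restrict (A ∪ B)) g f =
      grandPartitionFunction (m.restrict A) g f * grandPartitionFunction (m.restrict B) g f := by
  rw [grandPartitionFunction, grandPartitionFunction, grandPartitionFunction,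
    tsum_mul_tsum_eq_tsum_sum_range_of_summable_norm (summable_norm_partitionFunction hle f)
      (summable_norm_partitionFunction hle f)]
  refine tsum_congr fun N => ?_
  rw [partitionFunction_restrict_union hg hle hA hB h, Finset.sum_mul, Finset.sum_div]
  refine Finset.sum_congr rfl fun k hk => ?_
  have hkN : k ≤ N := Finset.mem_range_succ_iff.1 hk
  rw [nsmul_eq_mul, Nat.cast_choose 𝕜 hkN, ← pow_mul_pow_sub f hkN]
  field_simp [Nat.factorial_ne_zero]

lemma grandPartitionFunction_restrict_biUnion [IsFiniteMeasure m]
    (hg : Measurable (Function.uncurry g)) (hle : ∀ x y, ‖g x y‖ ≤ 1) {C : κ → Set X}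
    (hC : ∀ k, MeasurableSet (C k)) (h : Pairwise fun k l => Decoupled g (C k) (C l))
    (s : Finset κ) (f : 𝕜) :
    grandPartitionFunction (m.restrict (⋃ k ∈ s, C k)) g f =
      ∏ k ∈ s, grandPartitionFunction (m.restrict (C k)) g f := by
  classical
  induction s using Finset.induction_on with
  | empty => simp [grandPartitionFunction_zero_measure]
  | insert k s hk ih =>
    rw [Finset.set_biUnion_insert, Finset.prod_insert hk, ← ih]
    exact grandPartitionFunction_restrict_union hg hle (hC k)
      (s.measurableSet_biUnion fun l _ => hC l)
      (.iUnion_right fun l hl => h fun hkl => hk (hkl ▸ hl)) f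

lemma grandPartitionFunction_eq_of_measurePreserving [SigmaFinite m] {m' : Measure Y}
    [SigmaFinite m'] {h : X → Y} (hh : MeasurePreserving h m m') {g : Y → Y → 𝕜}
    (hg : Measurable (Function.uncurry g)) (f : 𝕜) :
    grandPartitionFunction m' g f = grandPartitionFunction m (fun x y => g (h x) (h y)) f :=
  tsum_congr fun _ => by rw [partitionFunction_eq_of_measurePreserving hh hg]

end PartitionFunction

section Spherical

open Projectivization
open scoped Pointwise

/-- The determinant `v₀ w₁ - v₁ w₀` of two vectors of the plane. -/
def wedge {R : Type*} [CommRing R] (v w : Fin 2 → R) : R := v 0 * w 1 - v 1 * w 0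

lemma wedge_smul_add_wedge_smul {R : Type*} [CommRing R] (u v w : Fin 2 → R) :
    wedge u v • w + wedge v w • u = wedge u w • v := by
  ext i
  fin_cases i <;> simp only [wedge, Pi.add_apply, Pi.smul_apply, smul_eq_mul, Fin.zero_eta,
    Fin.mk_one] <;> ring

lemma continuous_wedge {R : Type*} [CommRing R] [TopologicalSpace R] [IsTopologicalRing R] :
    Continuous fun z : (Fin 2 → R) × (Fin 2 → R) => wedge z.1 z.2 := by
  unfold wedge
  fun_prop

lemma wedge_mulVec {R : Type*} [CommRing R] (A : Matrix (Fin 2) (Fin 2) R) (v w : Fin 2 → R) :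
    wedge (A.mulVec v) (A.mulVec w) = A.det * wedge v w := by
  simp only [wedge, Matrix.mulVec, dotProduct, Fin.sum_univ_two, Matrix.det_fin_two]
  ring

lemma exists_wedge_ne_zero {R : Type*} [CommRing R] [Nontrivial R] {w : Fin 2 → R} (hw : w ≠ 0) :
    ∃ u, wedge u w ≠ 0 := by
  by_contra! h
  refine hw (funext (Fin.forall_fin_two.2 ⟨?_, ?_⟩))
  · simpa [wedge] using h ![0, 1]
  · simpa [wedge] using h ![1, 0]

lemma mk_eq_mk_iff_wedge_eq_zero {K : Type*} [Field K] {v w : Fin 2 → K} (hv : v ≠ 0)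
    (hw : w ≠ 0) : mk K v hv = mk K w hw ↔ wedge v w = 0 := by
  rw [mk_eq_mk_iff']
  constructor
  · rintro ⟨a, rfl⟩
    simp only [wedge, Pi.smul_apply, smul_eq_mul]
    ring
  · intro h
    obtain ⟨u, hu⟩ := exists_wedge_ne_zero hw
    have := wedge_smul_add_wedge_smul u v w
    rw [h, zero_smul, add_zero] at this
    exact ⟨(wedge u w)⁻¹ * wedge u v, by rw [mul_smul, this, inv_smul_smul₀ hu]⟩

lemma norm_eq_max_of_fin_two {E : Type*} [SeminormedAddGroup E] (v : Fin 2 → E) :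
    ‖v‖ = max ‖v 0‖ ‖v 1‖ := by
  refine le_antisymm ((pi_norm_le_iff_of_nonneg (by positivity)).2 (Fin.forall_fin_two.2 ?_))
    (max_le (norm_le_pi_norm v 0) (norm_le_pi_norm v 1))
  exact ⟨le_max_left _ _, le_max_right _ _⟩

lemma norm_wedge_le {K : Type*} [NormedField K] [IsUltrametricDist K] (v w : Fin 2 → K) :
    ‖wedge v w‖ ≤ ‖v‖ * ‖w‖ := by
  rw [wedge, sub_eq_add_neg]
  refine (IsUltrametricDist.norm_add_le_max _ _).trans ?_
  rw [norm_neg, norm_mul, norm_mul]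
  exact max_le (by gcongr <;> exact norm_le_pi_norm _ _)
    (by gcongr <;> exact norm_le_pi_norm _ _)

variable {p : ℕ} [Fact p.Prime]

lemma sdelta_eq (v w : Fin 2 → ℚ_[p]) : sdelta p v w = ‖wedge v w‖ / (‖v‖ * ‖w‖) := by
  rw [sdelta, wedge, norm_eq_max_of_fin_two, norm_eq_max_of_fin_two]

lemma pdelta_mk {v w : Fin 2 → ℚ_[p]} (hv : v ≠ 0) (hw : w ≠ 0) :
    pdelta p (mk _ v hv) (mk _ w hw) = ‖wedge v w‖ / (‖v‖ * ‖w‖) := by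
  obtain ⟨a, ha⟩ := exists_smul_eq_mk_rep ℚ_[p] v hv
  obtain ⟨b, hb⟩ := exists_smul_eq_mk_rep ℚ_[p] w hw
  have hwedge : wedge (a • v) (b • w) = (a * b) * wedge v w := by
    simp only [wedge, Pi.smul_apply, Units.smul_def, smul_eq_mul]
    ring
  have hab : ‖(a : ℚ_[p])‖ * ‖(b : ℚ_[p])‖ ≠ 0 := by simp
  rw [pdelta, sdelta_eq, ← ha, ← hb, hwedge, Units.smul_def, Units.smul_def, norm_smul, norm_smul,
    norm_mul, norm_mul, mul_mul_mul_comm, mul_div_mul_left _ _ hab]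

lemma pdelta_nonneg (x y : P1 p) : 0 ≤ pdelta p x y := by
  rw [pdelta, sdelta_eq]
  positivity

lemma pdelta_le_one (x y : P1 p) : pdelta p x y ≤ 1 := by
  rw [pdelta, sdelta_eq]
  exact div_le_one_of_le₀ (norm_wedge_le _ _) (by positivity)

lemma pdelta_comm (x y : P1 p) : pdelta p x y = pdelta p y x := by
  rw [pdelta, pdelta, sdelta_eq, sdelta_eq, mul_comm, ← norm_neg, wedge, wedge, neg_sub]
  simp only [mul_comm]

lemma pdelta_eq_zero_iff {x y : P1 p} : pdelta p x y = 0 ↔ x = y := by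
  induction x using ind with | h v hv
  induction y using ind with | h w hw
  rw [pdelta_mk hv hw, mk_eq_mk_iff_wedge_eq_zero]
  simp [hv, hw]

lemma pdelta_self (x : P1 p) : pdelta p x x = 0 := pdelta_eq_zero_iff.2 rfl

lemma pdelta_le_max (x y z : P1 p) : pdelta p x z ≤ max (pdelta p x y) (pdelta p y z) := by
  induction x using ind with | h u hu
  induction y using ind with | h v hv
  induction z using ind with | h w hw
  have huw : ‖wedge u w‖ * ‖v‖ ≤ max (‖wedge u v‖ * ‖w‖) (‖wedge v w‖ * ‖u‖) := by
    simp only [← norm_smul, ← wedge_smul_add_wedge_smul u v w]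
    exact IsUltrametricDist.norm_add_le_max _ _
  rw [pdelta_mk hu hw, pdelta_mk hu hv, pdelta_mk hv hw, le_max_iff]
  refine (le_max_iff.1 huw).imp (fun h => ?_) fun h => ?_
  · rw [div_le_div_iff₀ (by positivity) (by positivity)]
    linarith [mul_le_mul_of_nonneg_left h (norm_nonneg u)]
  · rw [div_le_div_iff₀ (by positivity) (by positivity)]
    linarith [mul_le_mul_of_nonneg_left h (norm_nonneg w)]

lemma pdelta_eq_one_of_lt {x y a b : P1 p} (hx : pdelta p x a < 1) (hy : pdelta p y b < 1)
    (hab : pdelta p a b = 1) : pdelta p x y = 1 := by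
  refine (pdelta_le_one x y).antisymm (not_lt.1 fun hxy => ?_)
  have hay : pdelta p a y < 1 := (pdelta_le_max a x y).trans_lt (max_lt (pdelta_comm x a ▸ hx) hxy)
  exact ((pdelta_le_max a y b).trans_lt (max_lt hay hy)).ne hab

lemma isOpenQuotientMap_mk' : IsOpenQuotientMap (mk' ℚ_[p] : _ → P1 p) := by
  have hquot : Topology.IsQuotientMap (mk' ℚ_[p] : _ → P1 p) := isQuotientMap_quot_mk
  refine ⟨hquot.surjective, hquot.continuous, fun U hU => ?_⟩
  have hsat : mk' ℚ_[p] ⁻¹' (mk' ℚ_[p] '' U) =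
      (Subtype.val ⁻¹' ((Set.univ : Set ℚ_[p]ˣ) • (Subtype.val '' U)) :
        Set {v : Fin 2 → ℚ_[p] // v ≠ 0}) := by
    ext v
    constructor
    · rintro ⟨w, hw, h⟩
      obtain ⟨a, ha⟩ := (mk_eq_mk_iff ℚ_[p] _ _ v.2 w.2).1 h.symm
      exact ⟨a, trivial, w, ⟨w, hw, rfl⟩, ha⟩
    · rintro ⟨a, -, _, ⟨w, hw, rfl⟩, ha⟩
      exact ⟨w, hw, ((mk_eq_mk_iff ℚ_[p] _ _ v.2 w.2).2 ⟨a, ha⟩).symm⟩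
  rw [← hquot.isOpen_preimage, hsat]
  exact (((isOpen_ne.isOpenEmbedding_subtypeVal.isOpenMap _ hU).smul_left).preimage
    continuous_subtype_val)

lemma secondCountableTopology_P1 : SecondCountableTopology (P1 p) :=
  isOpenQuotientMap_mk'.isQuotientMap.secondCountableTopology isOpenQuotientMap_mk'.isOpenMap

lemma continuous_pdelta : Continuous fun z : P1 p × P1 p => pdelta p z.1 z.2 := by
  have hmk := isOpenQuotientMap_mk' (p := p)
  rw [← (hmk.prodMap hmk).continuous_comp_iff]
  have hcomp : (fun z : P1 p × P1 p => pdelta p z.1 z.2) ∘ Prod.map (mk' ℚ_[p]) (mk' ℚ_[p]) =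
      fun z => ‖wedge z.1.1 z.2.1‖ / (‖z.1.1‖ * ‖z.2.1‖) :=
    funext fun z => pdelta_mk z.1.2 z.2.2
  rw [hcomp]
  refine .div (continuous_wedge.comp
    (continuous_subtype_val.prodMap continuous_subtype_val)).norm (by fun_prop) fun z => ?_
  exact mul_ne_zero (norm_ne_zero_iff.2 z.1.2) (norm_ne_zero_iff.2 z.2.2)

instance : T2Space (P1 p) := by
  rw [t2_iff_isClosed_diagonal]
  convert isClosed_singleton.preimage (continuous_pdelta (p := p)) (t := {0})
  ext
  exact pdelta_eq_zero_iff.symm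

end Spherical

noncomputable section Mobius

open Projectivization
open scoped MatrixGroups

variable {p : ℕ} [Fact p.Prime] {A B : Matrix (Fin 2) (Fin 2) ℚ_[p]}

lemma mobius_mk (hA : A.det ≠ 0) {v : Fin 2 → ℚ_[p]} (hv : v ≠ 0) :
    mobius p A (mk _ v hv) =
      mk _ (A.mulVec v) (mt (Matrix.eq_zero_of_mulVec_eq_zero hA) hv) := by
  have hrep := mt (Matrix.eq_zero_of_mulVec_eq_zero hA) (mk ℚ_[p] v hv).rep_nonzero
  obtain ⟨a, ha⟩ := exists_smul_eq_mk_rep ℚ_[p] v hv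
  rw [mobius, dif_pos hrep, mk_eq_mk_iff]
  exact ⟨a, by rw [← ha, Units.smul_def, Units.smul_def, Matrix.mulVec_smul]⟩

lemma mobius_one (ξ : P1 p) : mobius p 1 ξ = ξ := by
  induction ξ using ind with | h v _
  simp only [mobius_mk (p := p) (A := 1) (by simp), Matrix.one_mulVec]

lemma mobius_mul (hA : A.det ≠ 0) (hB : B.det ≠ 0) (ξ : P1 p) :
    mobius p (A * B) ξ = mobius p A (mobius p B ξ) := by
  induction ξ using ind with | h v hv
  have hAB : (A * B).det ≠ 0 := by simp [hA, hB]
  simp only [mobius_mk, hA, hB, hAB, ne_eq, not_false_eq_true, Matrix.mulVec_mulVec]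

lemma continuous_mobius (hA : A.det ≠ 0) : Continuous (mobius p A) := by
  have hmk := (isOpenQuotientMap_mk' (p := p)).isQuotientMap
  rw [hmk.continuous_iff]
  have hcomp : mobius p A ∘ mk' ℚ_[p] = fun v => mk' ℚ_[p]
      ⟨A.mulVec v.1, mt (Matrix.eq_zero_of_mulVec_eq_zero hA) v.2⟩ :=
    funext fun v => mobius_mk hA v.2
  rw [hcomp]
  exact hmk.continuous.comp
    (.subtype_mk (Continuous.matrix_mulVec continuous_const continuous_subtype_val) _)

lemma norm_mulVec_le {K : Type*} [NormedField K] [IsUltrametricDist K]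
    {A : Matrix (Fin 2) (Fin 2) K} (hA : ∀ i j, ‖A i j‖ ≤ 1) (v : Fin 2 → K) :
    ‖A.mulVec v‖ ≤ ‖v‖ := by
  refine (pi_norm_le_iff_of_nonneg (norm_nonneg v)).2 fun i => ?_
  have hentry (j : Fin 2) : ‖A i j * v j‖ ≤ ‖v‖ := by
    rw [norm_mul]
    exact (mul_le_of_le_one_left (norm_nonneg _) (hA i j)).trans (norm_le_pi_norm v j)
  rw [Matrix.mulVec, dotProduct, Fin.sum_univ_two]
  exact (IsUltrametricDist.norm_add_le_max _ _).trans (max_le (hentry 0) (hentry 1))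

/-- The inclusion of `SL₂(ℤ_p)` in the matrices over `ℚ_p`, on which `mobius` is defined. -/
def toMatrix : SL(2, ℤ_[p]) →* Matrix (Fin 2) (Fin 2) ℚ_[p] where
  toFun A := PadicInt.Coe.ringHom.mapMatrix A.1
  map_one' := by simp
  map_mul' A B := by simp

lemma toMatrix_fin_two (a b c d : ℤ_[p]) (h : !![a, b; c, d].det = 1) :
    toMatrix ⟨!![a, b; c, d], h⟩ = !![(a : ℚ_[p]), b; c, d] := by
  ext i j
  fin_cases i <;> fin_cases j <;> rfl

lemma norm_toMatrix_le_one (A : SL(2, ℤ_[p])) (i j : Fin 2) : ‖toMatrix A i j‖ ≤ 1 :=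
  PadicInt.norm_le_one _

lemma det_toMatrix (A : SL(2, ℤ_[p])) : (toMatrix A).det = 1 := by
  change (PadicInt.Coe.ringHom.mapMatrix A.1).det = 1
  rw [← RingHom.map_det, A.2, map_one]

lemma det_toMatrix_ne_zero (A : SL(2, ℤ_[p])) : (toMatrix A).det ≠ 0 := by simp [det_toMatrix]

lemma toMatrix_mulVec_ne_zero (A : SL(2, ℤ_[p])) {v : Fin 2 → ℚ_[p]} (hv : v ≠ 0) :
    (toMatrix A).mulVec v ≠ 0 :=
  mt (Matrix.eq_zero_of_mulVec_eq_zero (det_toMatrix_ne_zero A)) hv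

lemma norm_toMatrix_mulVec (A : SL(2, ℤ_[p])) (v : Fin 2 → ℚ_[p]) :
    ‖(toMatrix A).mulVec v‖ = ‖v‖ := by
  refine (norm_mulVec_le (norm_toMatrix_le_one A) v).antisymm ?_
  calc ‖v‖ = ‖(toMatrix A⁻¹).mulVec ((toMatrix A).mulVec v)‖ := by
        rw [Matrix.mulVec_mulVec, ← map_mul, inv_mul_cancel, map_one, Matrix.one_mulVec]
    _ ≤ ‖(toMatrix A).mulVec v‖ := norm_mulVec_le (norm_toMatrix_le_one _) _

/-- The action of `SL₂(ℤ_p)` on the projective line through `mobius`. -/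
instance : MulAction SL(2, ℤ_[p]) (P1 p) where
  smul A ξ := mobius p (toMatrix A) ξ
  one_smul ξ := by
    change mobius p (toMatrix 1) ξ = ξ
    rw [map_one, mobius_one]
  mul_smul A B ξ := by
    change mobius p (toMatrix (A * B)) ξ = _
    rw [map_mul, mobius_mul (det_toMatrix_ne_zero A) (det_toMatrix_ne_zero B)]
    rfl

lemma smul_mk (A : SL(2, ℤ_[p])) {v : Fin 2 → ℚ_[p]} (hv : v ≠ 0) :
    A • (mk _ v hv : P1 p) = mk _ ((toMatrix A).mulVec v) (toMatrix_mulVec_ne_zero A hv) :=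
  mobius_mk (det_toMatrix_ne_zero A) hv

lemma pdelta_smul (A : SL(2, ℤ_[p])) (ξ η : P1 p) : pdelta p (A • ξ) (A • η) = pdelta p ξ η := by
  induction ξ using ind with | h v hv
  induction η using ind with | h w hw
  rw [smul_mk, smul_mk, pdelta_mk, pdelta_mk, wedge_mulVec, det_toMatrix, one_mul,
    norm_toMatrix_mulVec, norm_toMatrix_mulVec]

lemma IsGLInvariant.measure_smul {ν : Measure (P1 p)} (hν : IsGLInvariant p ν)
    (A : SL(2, ℤ_[p])) {M : Set (P1 p)} (hM : MeasurableSet M) : ν ((A • ·) '' M) = ν M :=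
  hν (toMatrix A) (norm_toMatrix_le_one A) (by rw [det_toMatrix, norm_one]) M hM

lemma IsGLInvariant.measurePreserving_smul {ν : Measure (P1 p)} (hν : IsGLInvariant p ν)
    (A : SL(2, ℤ_[p])) : MeasurePreserving (A • · : P1 p → P1 p) ν ν := by
  have hA : Measurable (A • · : P1 p → P1 p) :=
    (continuous_mobius (det_toMatrix_ne_zero A)).measurable
  refine ⟨hA, Measure.ext fun M hM => ?_⟩
  rw [Measure.map_apply hA hM, ← hν.measure_smul A (hA hM),
    Set.image_preimage_eq M (MulAction.surjective A)]

/-- The unipotent matrix acting on `ℚ_p` as the translation by `b`. -/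
def translation (b : ℤ_[p]) : SL(2, ℤ_[p]) := ⟨!![1, b; 0, 1], by simp⟩

lemma translation_smul_iota (b : ℤ_[p]) (x : ℚ_[p]) :
    translation b • iota p x = iota p (b + x) := by
  rw [iota, smul_mk]
  congr 1
  ext i
  fin_cases i <;> simp [translation, toMatrix_fin_two, Matrix.mulVec, dotProduct, add_comm]

lemma exists_smul_iota_zero_eq (ξ : P1 p) : ∃ A : SL(2, ℤ_[p]), A • iota p 0 = ξ := by
  induction ξ using ind with | h v hv
  rcases le_total ‖v 0‖ ‖v 1‖ with h | h
  · have hv1 : v 1 ≠ 0 := fun h1 => hv (funext (Fin.forall_fin_two.2 (by simpa [h1] using h)))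
    let b : ℤ_[p] := ⟨v 0 / v 1, by rw [norm_div]; exact div_le_one_of_le₀ h (norm_nonneg _)⟩
    refine ⟨translation b, ?_⟩
    rw [translation_smul_iota, iota, mk_eq_mk_iff_wedge_eq_zero]
    simp [wedge, b, hv1]
  · have hv0 : v 0 ≠ 0 := fun h0 => hv (funext (Fin.forall_fin_two.2 (by simpa [h0] using h)))
    let b : ℤ_[p] := ⟨v 1 / v 0, by rw [norm_div]; exact div_le_one_of_le₀ h (norm_nonneg _)⟩
    let A : SL(2, ℤ_[p]) := ⟨!![0, 1; -1, b], by simp⟩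
    refine ⟨A, ?_⟩
    have hA : toMatrix A = !![0, 1; -1, v 1 / v 0] :=
      (toMatrix_fin_two 0 1 (-1) b _).trans (by simp [b])
    rw [iota, smul_mk, mk_eq_mk_iff_wedge_eq_zero, hA]
    simp [wedge, Matrix.mulVec, dotProduct, hv0]

end Mobius

noncomputable section ResidueBall

open Projectivization
open scoped MatrixGroups

variable {p : ℕ} [Fact p.Prime]

/-- The point `[1 : 0]` at infinity of the projective line. -/
def infinity : P1 p := mk _ ![1, 0] fun h => one_ne_zero (congrFun h 0)

/-- The open unit ball around `c` for the spherical metric, that is, the fibre through `c` of the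
reduction `ℙ¹(ℚ_p) → ℙ¹(𝔽_p)`. -/
def residueBall (c : P1 p) : Set (P1 p) := {ξ | pdelta p ξ c < 1}

lemma measurableSet_residueBall (c : P1 p) : MeasurableSet (residueBall c) :=
  (isOpen_lt (continuous_pdelta.comp (.prodMk_left c)) continuous_const).measurableSet

lemma disjoint_residueBall {c d : P1 p} (h : pdelta p c d = 1) :
    Disjoint (residueBall c) (residueBall d) :=
  Set.disjoint_left.2 fun ξ hc hd => by
    simpa [pdelta_self] using pdelta_eq_one_of_lt hc hd h

lemma smul_preimage_residueBall (A : SL(2, ℤ_[p])) (c : P1 p) :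
    (A • ·) ⁻¹' residueBall (A • c) = residueBall c :=
  Set.ext fun ξ => by simp only [residueBall, Set.mem_preimage, Set.mem_ofPred_eq, pdelta_smul]

lemma pdelta_iota {x y : ℚ_[p]} (hx : x ∈ Zball p) (hy : y ∈ Zball p) :
    pdelta p (iota p x) (iota p y) = ‖x - y‖ := by
  have hnorm {z : ℚ_[p]} (hz : z ∈ Zball p) : ‖![z, 1]‖ = 1 := by
    rw [norm_eq_max_of_fin_two]
    simpa [Zball] using hz
  rw [iota, iota, pdelta_mk, hnorm hx, hnorm hy]
  simp [wedge]

lemma image_iota_Zball : iota p '' Zball p = (residueBall infinity)ᶜ := by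
  ext ξ
  induction ξ using ind with | h v hv
  have hdelta : pdelta p (mk _ v hv) infinity = ‖v 1‖ / ‖v‖ := by
    rw [infinity, pdelta_mk, norm_eq_max_of_fin_two ![(1 : ℚ_[p]), 0]]
    simp [wedge]
  have hball : mk _ v hv ∈ (residueBall infinity)ᶜ ↔ ‖v 0‖ ≤ ‖v 1‖ := by
    rw [Set.mem_compl_iff, residueBall, Set.mem_ofPred_eq, not_lt, hdelta,
      one_le_div (norm_pos_iff.2 hv), norm_eq_max_of_fin_two, max_le_iff, and_iff_left le_rfl]
  rw [hball]
  have hiota (x : ℚ_[p]) : iota p x = mk _ v hv ↔ x * v 1 = v 0 := by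
    rw [iota, mk_eq_mk_iff_wedge_eq_zero, wedge, sub_eq_zero]
    simp
  simp only [Set.mem_image, hiota, Zball, Set.mem_ofPred_eq]
  constructor
  · rintro ⟨x, hx, hxv⟩
    rw [← hxv, norm_mul]
    exact mul_le_of_le_one_left (norm_nonneg _) hx
  · intro h
    have hv1 : v 1 ≠ 0 := fun h1 => hv (funext (Fin.forall_fin_two.2 (by simpa [h1] using h)))
    exact ⟨v 0 / v 1, by rw [norm_div]; exact div_le_one_of_le₀ h (norm_nonneg _),
      div_mul_cancel₀ _ hv1⟩

lemma pdelta_iota_infinity {x : ℚ_[p]} (hx : x ∈ Zball p) :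
    pdelta p (iota p x) infinity = 1 := by
  have h : iota p x ∈ (residueBall infinity)ᶜ := image_iota_Zball.subset ⟨x, hx, rfl⟩
  exact (pdelta_le_one _ _).antisymm (not_lt.1 h)

/-- Representatives in `ℙ¹(ℚ_p)` of the points of `ℙ¹(𝔽_p) = 𝔽_p ∪ {∞}`. -/
def residueCenter : Option (Fin p) → P1 p
  | none => infinity
  | some k => iota p k

lemma natCast_mem_Zball (k : ℕ) : (k : ℚ_[p]) ∈ Zball p :=
  IsUltrametricDist.norm_natCast_le_one ℚ_[p] k

lemma pairwise_pdelta_residueCenter :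
    Pairwise fun k l : Option (Fin p) => pdelta p (residueCenter k) (residueCenter l) = 1 := by
  rintro (_ | k) (_ | l) hkl
  · contradiction
  · rw [pdelta_comm]
    exact pdelta_iota_infinity (natCast_mem_Zball l)
  · exact pdelta_iota_infinity (natCast_mem_Zball k)
  · rw [residueCenter, residueCenter, pdelta_iota (natCast_mem_Zball k) (natCast_mem_Zball l)]
    have hcast : ((k : ℕ) : ℚ_[p]) - ((l : ℕ) : ℚ_[p]) = ((k - l : ℤ) : ℚ_[p]) := by
      push_cast
      rfl
    rw [hcast]
    refine (Padic.norm_int_le_one _).antisymm (not_lt.1 fun h => hkl ?_)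
    rw [Padic.norm_intCast_lt_one_iff] at h
    have := Int.eq_zero_of_abs_lt_dvd h (by rw [abs_lt]; omega)
    congr 1
    omega

lemma iUnion_residueBall : ⋃ k, residueBall (p := p) (residueCenter k) = Set.univ := by
  refine Set.eq_univ_of_forall fun ξ => Set.mem_iUnion.2 ?_
  by_cases hξ : ξ ∈ residueBall infinity
  · exact ⟨none, hξ⟩
  · obtain ⟨x, hx, rfl⟩ := image_iota_Zball.superset hξ
    obtain ⟨n, hn, hxn⟩ := PadicInt.exists_mem_range (⟨x, hx⟩ : ℤ_[p])
    refine ⟨some ⟨n, hn⟩, ?_⟩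
    rw [IsLocalRing.mem_maximalIdeal, PadicInt.mem_nonunits] at hxn
    rw [residueBall, Set.mem_ofPred_eq, residueCenter, pdelta_iota hx (natCast_mem_Zball n)]
    exact hxn

variable {ν : Measure (P1 p)}

lemma IsGLInvariant.measurePreserving_residueBall (hν : IsGLInvariant p ν) (A : SL(2, ℤ_[p]))
    (c : P1 p) : MeasurePreserving (A • · : P1 p → P1 p) (ν.restrict (residueBall c))
      (ν.restrict (residueBall (A • c))) := by
  have h := (hν.measurePreserving_smul A).restrict_preimage (measurableSet_residueBall (A • c))
  rwa [smul_preimage_residueBall] at h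

lemma IsGLInvariant.measure_residueBall [IsProbabilityMeasure ν] (hν : IsGLInvariant p ν)
    (c : P1 p) : ν (residueBall c) = (p + 1 : ENNReal)⁻¹ := by
  have hzero (d : P1 p) : ν (residueBall d) = ν (residueBall (iota p 0)) := by
    obtain ⟨A, rfl⟩ := exists_smul_iota_zero_eq d
    simpa using (hν.measurePreserving_residueBall A (iota p 0)).measure_preimage
      MeasurableSet.univ.nullMeasurableSet |>.symm
  have htotal : ν Set.univ = ∑ k, ν (residueBall (residueCenter k)) := by
    rw [← iUnion_residueBall, measure_iUnion
      (fun k l hkl => disjoint_residueBall (pairwise_pdelta_residueCenter hkl))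
      (fun k => measurableSet_residueBall _), tsum_fintype]
  simp only [hzero, measure_univ, Finset.sum_const, Finset.card_univ, Fintype.card_option,
    Fintype.card_fin, nsmul_eq_mul] at htotal
  rw [hzero]
  exact ENNReal.eq_inv_of_mul_eq_one_left (by rw [mul_comm]; exact_mod_cast htotal.symm)

variable {𝕜 : Type*} [RCLike 𝕜] {φ : ℝ → 𝕜}

lemma decoupled_residueBall (hφ : φ 1 = 1) {c d : P1 p} (h : pdelta p c d = 1) :
    Decoupled (fun ξ η => φ (pdelta p ξ η)) (residueBall c) (residueBall d) where
  disjoint := disjoint_residueBall h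
  left_eq_one ξ hξ η hη := by rw [pdelta_eq_one_of_lt hξ hη h, hφ]
  right_eq_one ξ hξ η hη := by rw [pdelta_comm, pdelta_eq_one_of_lt hξ hη h, hφ]

lemma measurable_comp_pdelta (hφ : Measurable φ) :
    Measurable (Function.uncurry fun ξ η => φ (pdelta p ξ η)) := by
  have := secondCountableTopology_P1 (p := p)
  exact hφ.comp continuous_pdelta.measurable

lemma IsGLInvariant.grandPartitionFunction_residueBall [SigmaFinite ν]
    (hν : IsGLInvariant p ν) (hφ : Measurable φ) (c : P1 p) (f : 𝕜) :
    grandPartitionFunction (ν.restrict (residueBall c)) (fun ξ η => φ (pdelta p ξ η)) f =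
      grandPartitionFunction (ν.restrict (residueBall (iota p 0)))
        (fun ξ η => φ (pdelta p ξ η)) f := by
  obtain ⟨A, rfl⟩ := exists_smul_iota_zero_eq c
  rw [grandPartitionFunction_eq_of_measurePreserving
    (hν.measurePreserving_residueBall A (iota p 0)) (measurable_comp_pdelta hφ)]
  simp only [pdelta_smul]

lemma IsGLInvariant.grandPartitionFunction_eq_pow [IsFiniteMeasure ν] (hν : IsGLInvariant p ν)
    (hφ : Measurable φ) (hle : ∀ t, 0 ≤ t → t ≤ 1 → ‖φ t‖ ≤ 1) (hone : φ 1 = 1) (f : 𝕜) :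
    grandPartitionFunction ν (fun ξ η => φ (pdelta p ξ η)) f =
      grandPartitionFunction (ν.restrict (residueBall (iota p 0)))
        (fun ξ η => φ (pdelta p ξ η)) f ^ (p + 1) := by
  have hprod := grandPartitionFunction_restrict_biUnion (m := ν) (measurable_comp_pdelta hφ)
    (fun ξ η => hle _ (pdelta_nonneg ξ η) (pdelta_le_one ξ η))
    (fun k => measurableSet_residueBall (residueCenter k))
    (fun k l hkl => decoupled_residueBall hone (pairwise_pdelta_residueCenter hkl))
    Finset.univ f
  simp only [Finset.mem_univ, Set.iUnion_true, iUnion_residueBall, Measure.restrict_univ,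
    hν.grandPartitionFunction_residueBall hφ, Finset.prod_const, Finset.card_univ,
    Fintype.card_option, Fintype.card_fin] at hprod
  exact hprod

end ResidueBall

noncomputable section Haar

open scoped NNReal MatrixGroups

lemma measurePreserving_comap_restrict_preimage {X Y : Type*} [MeasurableSpace X]
    [MeasurableSpace Y] {e : X → Y} (he : MeasurableEmbedding e) (m : Measure Y) {T : Set Y}
    (hT : T ⊆ Set.range e) :
    MeasurePreserving e ((m.comap e).restrict (e ⁻¹' T)) (m.restrict T) := by
  refine ⟨he.measurable, ?_⟩
  rw [← he.restrict_map, he.map_comap, Measure.restrict_restrict_of_subset hT]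

variable {p : ℕ} [Fact p.Prime]

instance : MeasurableSpace ℤ_[p] := borel _
instance : BorelSpace ℤ_[p] := ⟨rfl⟩

lemma isOpenEmbedding_coeRingHom :
    Topology.IsOpenEmbedding (PadicInt.Coe.ringHom : ℤ_[p] →+* ℚ_[p]) :=
  PadicInt.isOpenEmbedding_coe

lemma range_coeRingHom : Set.range (PadicInt.Coe.ringHom : ℤ_[p] →+* ℚ_[p]) = Zball p :=
  Subtype.range_coe

/-- The restriction of `iota` to `ℤ_p`. -/
def integralIota (z : ℤ_[p]) : P1 p := iota p z

lemma range_integralIota : Set.range (integralIota (p := p)) = (residueBall infinity)ᶜ := by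
  rw [← image_iota_Zball, ← range_coeRingHom, ← Set.range_comp]
  rfl

lemma pdelta_integralIota (z w : ℤ_[p]) :
    pdelta p (integralIota z) (integralIota w) = ‖z - w‖ :=
  pdelta_iota z.2 w.2

lemma continuous_iota : Continuous (iota p) :=
  isOpenQuotientMap_mk'.continuous.comp (.subtype_mk (by fun_prop) _)

lemma measurableEmbedding_integralIota : MeasurableEmbedding (integralIota (p := p)) := by
  have hinj : Function.Injective (integralIota (p := p)) := fun z w hzw => by
    rw [← sub_eq_zero, ← norm_eq_zero, ← pdelta_integralIota, hzw, pdelta_self]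
  have hcont : Continuous (integralIota (p := p)) :=
    continuous_iota.comp isOpenEmbedding_coeRingHom.continuous
  exact (hcont.isClosedEmbedding hinj).measurableEmbedding

lemma translation_smul_integralIota (b z : ℤ_[p]) :
    translation b • integralIota z = integralIota (b + z) := by
  rw [integralIota, translation_smul_iota, integralIota, PadicInt.coe_add]

lemma preimage_integralIota_residueBall :
    integralIota ⁻¹' residueBall (iota p 0) = PadicInt.Coe.ringHom ⁻¹' Pball p := by
  ext z
  have h : pdelta p (integralIota z) (iota p 0) = ‖z‖ := by
    simpa only [integralIota, PadicInt.coe_zero, sub_zero] using pdelta_integralIota z 0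
  rw [Set.mem_preimage, residueBall, Set.mem_ofPred_eq, h]
  rfl

variable {ν : Measure (P1 p)}

lemma IsGLInvariant.isAddLeftInvariant_comap (hν : IsGLInvariant p ν) :
    (ν.comap integralIota).IsAddLeftInvariant := by
  refine ⟨fun b => Measure.ext fun S hS => ?_⟩
  have hbS := measurable_const_add b hS
  have he := measurableEmbedding_integralIota (p := p)
  have himage : (translation b • ·) '' (integralIota '' ((b + ·) ⁻¹' S)) = integralIota '' S := by
    simp only [Set.image_image, translation_smul_integralIota]
    rw [← Set.image_image integralIota (b + ·), Set.image_preimage_eq S (add_left_surjective b)]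
  rw [Measure.map_apply (measurable_const_add b) hS, he.comap_apply, he.comap_apply, ← himage,
    hν.measure_smul (translation b) (he.measurableSet_image.2 hbS)]

lemma IsGLInvariant.comap_integralIota_univ [IsProbabilityMeasure ν] (hν : IsGLInvariant p ν) :
    ν.comap integralIota Set.univ = ((p : ℝ≥0) / (p + 1) : ℝ≥0) := by
  rw [measurableEmbedding_integralIota.comap_apply, Set.image_univ, range_integralIota,
    prob_compl_eq_one_sub (measurableSet_residueBall _), hν.measure_residueBall]
  refine ENNReal.sub_eq_of_eq_add (by simp) ?_
  have hone : (1 : ℝ≥0) = p / (p + 1) + ((p : ℝ≥0) + 1)⁻¹ := by field_simp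
  have hinv : ((p : ENNReal) + 1)⁻¹ = (((p : ℝ≥0) + 1)⁻¹ : ℝ≥0) := by
    rw [ENNReal.coe_inv (by positivity), ENNReal.coe_add, ENNReal.coe_natCast, ENNReal.coe_one]
  rw [hinv]
  exact_mod_cast hone

variable {μ : Measure ℚ_[p]}

lemma isProbabilityMeasure_comap_coeRingHom (hμ : μ (Zball p) = 1) :
    IsProbabilityMeasure (μ.comap PadicInt.Coe.ringHom) := by
  constructor
  rw [isOpenEmbedding_coeRingHom.measurableEmbedding.comap_apply, Set.image_univ,
    range_coeRingHom, hμ]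

lemma measurePreserving_coeRingHom_restrict_Pball :
    MeasurePreserving PadicInt.Coe.ringHom
      ((μ.comap PadicInt.Coe.ringHom).restrict (PadicInt.Coe.ringHom ⁻¹' Pball p))
      (μ.restrict (Pball p)) :=
  measurePreserving_comap_restrict_preimage isOpenEmbedding_coeRingHom.measurableEmbedding μ
    fun x (hx : ‖x‖ < 1) => range_coeRingHom.superset (show ‖x‖ ≤ 1 from hx.le)

variable {𝕜 : Type*} [RCLike 𝕜] {φ : ℝ → 𝕜}

lemma measurable_comp_norm_sub (hφ : Measurable φ) :
    Measurable (Function.uncurry fun x y : ℚ_[p] => φ ‖x - y‖) :=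
  hφ.comp (continuous_fst.sub continuous_snd).norm.measurable

lemma summable_norm_partitionFunction_restrict_Pball [SigmaFinite μ] (hμ : μ (Zball p) = 1)
    (hφ : Measurable φ) (hle : ∀ t, 0 ≤ t → t ≤ 1 → ‖φ t‖ ≤ 1) (f : 𝕜) :
    Summable fun N => ‖partitionFunction (μ.restrict (Pball p)) (fun x y => φ ‖x - y‖) (Fin N) *
      f ^ N / (N.factorial : 𝕜)‖ := by
  have := isProbabilityMeasure_comap_coeRingHom hμ
  simp only [partitionFunction_eq_of_measurePreserving measurePreserving_coeRingHom_restrict_Pball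
    (measurable_comp_norm_sub hφ)]
  exact summable_norm_partitionFunction
    (fun z w : ℤ_[p] => hle _ (norm_nonneg _) (PadicInt.norm_le_one (z - w))) f

variable [IsProbabilityMeasure ν] [μ.IsAddHaarMeasure]

lemma IsGLInvariant.comap_integralIota (hν : IsGLInvariant p ν) (hμ : μ (Zball p) = 1) :
    ν.comap integralIota = ((p : ℝ≥0) / (p + 1)) • μ.comap PadicInt.Coe.ringHom := by
  have hcoe := isOpenEmbedding_coeRingHom (p := p)
  have : (ν.comap integralIota).IsAddLeftInvariant := hν.isAddLeftInvariant_comap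
  have : (μ.comap PadicInt.Coe.ringHom).IsAddHaarMeasure :=
    Measure.IsAddHaarMeasure.comap (mH := inferInstance) μ
      (f := PadicInt.Coe.ringHom.toAddMonoidHom) hcoe
  have := isProbabilityMeasure_comap_coeRingHom hμ
  have hsmul := Measure.isAddInvariant_eq_smul_of_compactSpace (ν.comap integralIota)
    (μ.comap PadicInt.Coe.ringHom)
  have hscalar := congrArg (· Set.univ) hsmul
  simp only [Measure.smul_apply, measure_univ, hν.comap_integralIota_univ, ENNReal.smul_def,
    smul_eq_mul, mul_one, ENNReal.coe_inj] at hscalar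
  exact hsmul.trans (by rw [hscalar])

lemma IsGLInvariant.grandPartitionFunction_residueBall_iota_zero [SigmaFinite μ]
    (hν : IsGLInvariant p ν) (hμ : μ (Zball p) = 1) (hφ : Measurable φ) (f : 𝕜) :
    grandPartitionFunction (ν.restrict (residueBall (iota p 0)))
        (fun ξ η => φ (pdelta p ξ η)) f =
      grandPartitionFunction (μ.restrict (Pball p)) (fun x y => φ ‖x - y‖)
        (((p : ℝ≥0) / (p + 1)) • f) := by
  have := isProbabilityMeasure_comap_coeRingHom hμ
  have hrange : residueBall (iota p 0) ⊆ Set.range integralIota := by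
    rw [range_integralIota, Set.subset_compl_iff_disjoint_right]
    exact disjoint_residueBall (pdelta_iota_infinity (by simp [Zball]))
  rw [grandPartitionFunction_eq_of_measurePreserving
      (measurePreserving_comap_restrict_preimage measurableEmbedding_integralIota ν hrange)
      (measurable_comp_pdelta hφ),
    grandPartitionFunction_eq_of_measurePreserving measurePreserving_coeRingHom_restrict_Pball
      (measurable_comp_norm_sub hφ), hν.comap_integralIota hμ, Measure.restrict_smul,
    grandPartitionFunction_smul, preimage_integralIota_residueBall]
  simp only [pdelta_integralIota]
  rfl

end Haar

lemma norm_ofReal_cpow_le_one {β : ℂ} (hβ : 0 ≤ β.re) {t : ℝ} (h0 : 0 ≤ t) (h1 : t ≤ 1) :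
    ‖(t : ℂ) ^ β‖ ≤ 1 := by
  refine (Complex.norm_cpow_le _ _).trans ?_
  rw [Complex.norm_of_nonneg h0, Complex.arg_ofReal_of_nonneg h0, zero_mul, Real.exp_zero, div_one]
  exact Real.rpow_le_one h0 h1 hβ

theorem statement_1_general (p : ℕ) [Fact p.Prime]
    (μ : Measure ℚ_[p]) [SigmaFinite μ] [μ.IsAddHaarMeasure] (hμ : μ (Zball p) = 1)
    (ν : Measure (P1 p)) [IsProbabilityMeasure ν] (hν : IsGLInvariant p ν)
    (β : ℂ) (hβ : 0 ≤ β.re) (f : ℂ) :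
    Summable (fun N => ‖ZP1 p ν N β * f ^ N / (N.factorial : ℂ)‖) ∧
    Summable (fun N =>
      ‖ZN p μ (Pball p) N β * ((p : ℂ) * f / ((p : ℂ) + 1)) ^ N / (N.factorial : ℂ)‖) ∧
    (∑' N, ZP1 p ν N β * f ^ N / (N.factorial : ℂ)) =
      (∑' N, ZN p μ (Pball p) N β * ((p : ℂ) * f / ((p : ℂ) + 1)) ^ N /
        (N.factorial : ℂ)) ^ (p + 1) := by
  let φ (t : ℝ) : ℂ := (t : ℂ) ^ β
  have hφ : Measurable φ := by fun_prop
  have hle (t : ℝ) (h0 : 0 ≤ t) (h1 : t ≤ 1) : ‖φ t‖ ≤ 1 := norm_ofReal_cpow_le_one hβ h0 h1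
  have hone : φ 1 = 1 := by simp [φ]
  have hfug : ((p : NNReal) / (p + 1)) • f = (p : ℂ) * f / ((p : ℂ) + 1) := by
    rw [NNReal.smul_def, Complex.real_smul]
    push_cast
    ring
  refine ⟨summable_norm_partitionFunction
      (fun ξ η => hle _ (pdelta_nonneg ξ η) (pdelta_le_one ξ η)) f,
    summable_norm_partitionFunction_restrict_Pball hμ hφ hle _, ?_⟩
  rw [← hfug]
  exact (hν.grandPartitionFunction_eq_pow hφ hle hone f).trans
    (congrArg (· ^ (p + 1)) (hν.grandPartitionFunction_residueBall_iota_zero hμ hφ f))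

theorem statement_1 (p : ℕ) [Fact p.Prime]
    (μ : Measure ℚ_[p]) [SigmaFinite μ] [μ.IsAddHaarMeasure] (hμ : μ (Zball p) = 1)
    (ν : Measure (P1 p)) [IsProbabilityMeasure ν] (hν : IsGLInvariant p ν)
    (β : ℝ) (hβ : 0 < β) (f : ℂ) :
    Summable (fun N => ‖ZP1 p ν N (β : ℂ) * f ^ N / (N.factorial : ℂ)‖) ∧
    Summable (fun N =>
      ‖ZN p μ (Pball p) N (β : ℂ) * ((p : ℂ) * f / ((p : ℂ) + 1)) ^ N / (N.factorial : ℂ)‖) ∧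
    (∑' N, ZP1 p ν N (β : ℂ) * f ^ N / (N.factorial : ℂ)) =
      (∑' N, ZN p μ (Pball p) N (β : ℂ) * ((p : ℂ) * f / ((p : ℂ) + 1)) ^ N /
        (N.factorial : ℂ)) ^ (p + 1) :=
  statement_1_general p μ hμ ν hν β (by simpa using hβ.le) f

end LogCoulomb
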